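/- Let X and Y be bounded open subsets of ℝⁿ, let h_j : X → Y (j = 1, 2, …) be homeomorphisms of X onto Y, and let h : X → ℝⁿ be continuous. Suppose h_j → h uniformly on compact subsets of X, and suppose the following uniform boundary condition holds: for every ε > 0 there exists δ > 0 such that for every x ∈ X with dist(x, ∂X) < δ one has dist(h_j(x), ∂Y) < ε for all j and dist(h(x), ∂Y) < ε. Then for every compact connected set K ⊂ Y, the preimage h⁻¹(K) is a compact, preconnected subset of X. -/

import Mathlib

open Filter Topology Metric

/-!
Away from a neighbourhood of `∂X` the domain is a compact set `D`, and the boundary condition forces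
`D` to contain the preimages, under `h` and all `h_j`, of a fixed neighbourhood of `K`. So
`h⁻¹(K) = D ∩ h⁻¹(K)` is compact. Given an open `U ⊇ h⁻¹(K)`, choose a connected open `W ⊇ K` so
close to `K` that points of `D` outside `U` stay away from `W` under `h`. When `h_j` is uniformly
close to `h` on `D`, the connected set `h_j⁻¹(W)` lies between `h⁻¹(K)` and `U`; since `U` is
arbitrary, `h⁻¹(K)` cannot be split.
-/

theorem isPreconnected_of_forall_isOpen_superset {E : Type*} [TopologicalSpace E] [T2Space E]
    {A : Set E} (hA : IsCompact A)
    (hP : ∀ U, IsOpen U → A ⊆ U → ∃ P, IsPreconnected P ∧ A ⊆ P ∧ P ⊆ U) :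
    IsPreconnected A := by
  rw [isPreconnected_iff_subset_of_fully_disjoint_closed hA.isClosed]
  intro u v hu hv hAuv huv
  obtain ⟨U, V, hU, hV, hAuU, hAvV, hUV⟩ :=
    SeparatedNhds.of_isCompact_isCompact (hA.inter_right hu) (hA.inter_right hv)
      (huv.mono Set.inter_subset_right Set.inter_subset_right)
  have hAUV : A ⊆ U ∪ V := fun x hx =>
    (hAuv hx).imp (fun hxu => hAuU ⟨hx, hxu⟩) (fun hxv => hAvV ⟨hx, hxv⟩)
  obtain ⟨P, hPconn, hAP, hPUV⟩ := hP (U ∪ V) (hU.union hV) hAUV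
  refine (hPconn.subset_or_subset hU hV hUV hPUV).imp (fun hPU x hx => ?_) (fun hPV x hx => ?_)
  · exact (hAuv hx).resolve_right fun hxv => hUV.notMem_of_mem_left (hPU (hAP hx)) (hAvV ⟨hx, hxv⟩)
  · exact (hAuv hx).resolve_left fun hxu => hUV.notMem_of_mem_left (hAuU ⟨hx, hxu⟩) (hPV (hAP hx))

theorem exists_isOpen_isPreconnected_between {F : Type*} [TopologicalSpace F]
    [LocallyConnectedSpace F] {K V : Set F} (hK : IsPreconnected K) (hV : IsOpen V) (hKV : K ⊆ V) :
    ∃ W, IsOpen W ∧ IsPreconnected W ∧ K ⊆ W ∧ W ⊆ V := by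
  obtain rfl | ⟨k, hk⟩ := K.eq_empty_or_nonempty
  · exact ⟨∅, isOpen_empty, isPreconnected_empty, Set.Subset.rfl, hKV⟩
  · exact ⟨connectedComponentIn V k, hV.connectedComponentIn, isPreconnected_connectedComponentIn,
      hK.subset_connectedComponentIn hk hKV, connectedComponentIn_subset V k⟩

theorem isCompact_inter_preimage {E F : Type*} [TopologicalSpace E] [TopologicalSpace F]
    {h : E → F} {D : Set E} {K : Set F} (hD : IsCompact D) (hh : ContinuousOn h D)
    (hK : IsClosed K) : IsCompact (D ∩ h ⁻¹' K) := by
  obtain ⟨C, hC, hCD⟩ := continuousOn_iff_isClosed.1 hh K hK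
  rw [Set.inter_comm, hCD]
  exact hD.inter_left hC

theorem exists_inter_preimage_thickening_subset {E F : Type*} [TopologicalSpace E]
    [PseudoMetricSpace F] {h : E → F} {D U : Set E} {K : Set F} (hD : IsCompact D)
    (hh : ContinuousOn h D) (hK : IsClosed K) (hU : IsOpen U) (hDKU : D ∩ h ⁻¹' K ⊆ U) :
    ∃ η > 0, D ∩ h ⁻¹' thickening η K ⊆ U := by
  have hcompact : IsCompact (h '' (D \ U)) :=
    (hD.diff hU).image_of_continuousOn (hh.mono Set.sdiff_subset)
  have hdisj : Disjoint (h '' (D \ U)) K := by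
    rw [Set.disjoint_left]
    rintro _ ⟨x, ⟨hxD, hxU⟩, rfl⟩ hxK
    exact hxU (hDKU ⟨hxD, hxK⟩)
  obtain ⟨η, hη, hηdisj⟩ := hdisj.exists_thickenings hcompact hK
  refine ⟨η, hη, fun x ⟨hxD, hxK⟩ => by_contra fun hxU => ?_⟩
  exact hηdisj.notMem_of_mem_left
    (self_subset_thickening hη _ (Set.mem_image_of_mem h ⟨hxD, hxU⟩)) hxK

theorem isPreconnected_inter_preimage_of_homeomorph {E F : Type*} [TopologicalSpace E]
    [TopologicalSpace F] {X : Set E} {Y W : Set F} {f : E → F} (e : X ≃ₜ Y)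
    (hfe : ∀ x : X, f x = e x) (hWY : W ⊆ Y) (hW : IsPreconnected W) :
    IsPreconnected (X ∩ f ⁻¹' W) := by
  have hpreimage : X ∩ f ⁻¹' W = (↑) '' (e ⁻¹' ((↑) ⁻¹' W : Set Y)) := by
    ext x
    simp only [Set.mem_inter_iff, Set.mem_preimage, Set.mem_image, Subtype.exists, exists_and_right,
      exists_eq_right, ← hfe, exists_prop]
  rw [hpreimage, IsInducing.subtypeVal.isPreconnected_image, e.isPreconnected_preimage,
    ← IsInducing.subtypeVal.isPreconnected_image, Subtype.image_preimage_coe,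
    Set.inter_eq_right.2 hWY]
  exact hW

theorem isPreconnected_inter_preimage_of_tendstoUniformlyOn {E F ι : Type*} [TopologicalSpace E]
    [T2Space E] [MetricSpace F] [LocallyConnectedSpace F] {p : Filter ι} [p.NeBot]
    {f : ι → E → F} {h : E → F} {D : Set E} {K V : Set F} (hD : IsCompact D)
    (hh : ContinuousOn h D) (hfh : TendstoUniformlyOn f h p D)
    (hK : IsCompact K) (hKconn : IsPreconnected K) (hV : IsOpen V) (hKV : K ⊆ V)
    (hf : ∀ᶠ j in p, ∀ W ⊆ V, IsOpen W → IsPreconnected W → IsPreconnected (D ∩ f j ⁻¹' W)) :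
    IsPreconnected (D ∩ h ⁻¹' K) := by
  refine isPreconnected_of_forall_isOpen_superset
    (isCompact_inter_preimage hD hh hK.isClosed) fun U hU hKU => ?_
  obtain ⟨η, hη, hηU⟩ := exists_inter_preimage_thickening_subset hD hh hK.isClosed hU hKU
  obtain ⟨W, hW, hWconn, hKW, hWV⟩ := exists_isOpen_isPreconnected_between hKconn
    (hV.inter isOpen_thickening)
    (Set.subset_inter hKV (self_subset_thickening (half_pos hη) K))
  obtain ⟨r, hr, hrW⟩ := hK.exists_thickening_subset_open hW hKW
  obtain ⟨j, hfj, hclose⟩ :=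
    (hf.and (Metric.tendstoUniformlyOn_iff.1 hfh _ (lt_min hr (half_pos hη)))).exists
  refine ⟨D ∩ f j ⁻¹' W, hfj W (hWV.trans Set.inter_subset_left) hW hWconn, ?_, ?_⟩
  · rintro x ⟨hxD, hxK⟩
    have hdist : dist (f j x) (h x) < r := dist_comm (h x) _ ▸ (lt_min_iff.1 (hclose x hxD)).1
    exact ⟨hxD, hrW (mem_thickening_iff.2 ⟨h x, hxK, hdist⟩)⟩
  · rintro x ⟨hxD, hxW⟩
    have hdist : dist (h x) (f j x) < η / 2 := (lt_min_iff.1 (hclose x hxD)).2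
    have hhx : h x ∈ thickening (η / 2 + η / 2) K := thickening_thickening_subset _ _ _
      (mem_thickening_iff.2 ⟨f j x, (hWV hxW).2, hdist⟩)
    exact hηU ⟨hxD, add_halves η ▸ hhx⟩

theorem isCompact_sdiff_thickening_frontier {E : Type*} [PseudoMetricSpace E] [ProperSpace E]
    {X : Set E} (hX : Bornology.IsBounded X) {δ : ℝ} (hδ : 0 < δ) :
    IsCompact (X \ thickening δ (frontier X)) := by
  have hclosure : closure X \ thickening δ (frontier X) = X \ thickening δ (frontier X) := by
    rw [closure_eq_self_union_frontier, Set.union_sdiff_distrib,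
      Set.sdiff_eq_empty.2 (self_subset_thickening hδ _), Set.union_empty]
  exact hclosure ▸ hX.isCompact_closure.diff isOpen_thickening

theorem inter_preimage_eq_sdiff_inter_preimage {E F : Type*} {f : E → F} {X T : Set E} {S V : Set F}
    (hf : Set.MapsTo f (X ∩ T) S) (hVS : Disjoint V S) : X ∩ f ⁻¹' V = (X \ T) ∩ f ⁻¹' V :=
  Set.Subset.antisymm
    (fun _ ⟨hxX, hxV⟩ => ⟨⟨hxX, fun hxT => hVS.notMem_of_mem_left hxV (hf ⟨hxX, hxT⟩)⟩, hxV⟩)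
    (Set.inter_subset_inter_left _ Set.sdiff_subset)

theorem stmt19_general {E F ι : Type*} [MetricSpace E] [ProperSpace E] [MetricSpace F]
    [LocallyConnectedSpace F] {p : Filter ι} [p.NeBot] {X : Set E} {Y : Set F}
    (hX : Bornology.IsBounded X) (hY : IsOpen Y) {f : ι → E → F} {h : E → F}
    (hf : ∀ᶠ j in p, ∀ W ⊆ Y, IsOpen W → IsPreconnected W → IsPreconnected (X ∩ f j ⁻¹' W))
    (hh : ContinuousOn h X) (hfh : ∀ D ⊆ X, IsCompact D → TendstoUniformlyOn f h p D)
    (hbdry : ∀ ε > 0, ∃ δ > 0,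
      (∀ᶠ j in p, Set.MapsTo (f j) (X ∩ thickening δ (frontier X)) (thickening ε (frontier Y))) ∧
        Set.MapsTo h (X ∩ thickening δ (frontier X)) (thickening ε (frontier Y)))
    {K : Set F} (hKY : K ⊆ Y) (hK : IsCompact K) (hKconn : IsPreconnected K) :
    IsCompact (X ∩ h ⁻¹' K) ∧ IsPreconnected (X ∩ h ⁻¹' K) := by
  have hKfrontier : Disjoint K (frontier Y) :=
    (disjoint_frontier_iff_isOpen.2 hY).symm.mono_left hKY
  obtain ⟨ε, hε, hdisj⟩ := hKfrontier.exists_thickenings hK isClosed_frontier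
  obtain ⟨δ, hδ, hfδ, hhδ⟩ := hbdry ε hε
  set D := X \ thickening δ (frontier X)
  have hD : IsCompact D := isCompact_sdiff_thickening_frontier hX hδ
  have hDX : D ⊆ X := Set.sdiff_subset
  have hKthick : K ⊆ thickening ε K := self_subset_thickening hε K
  rw [inter_preimage_eq_sdiff_inter_preimage hhδ (hdisj.mono_left hKthick)]
  refine ⟨isCompact_inter_preimage hD (hh.mono hDX) hK.isClosed, ?_⟩
  refine isPreconnected_inter_preimage_of_tendstoUniformlyOn hD (hh.mono hDX) (hfh D hDX hD)
    hK hKconn (hY.inter isOpen_thickening) (Set.subset_inter hKY hKthick) ?_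
  filter_upwards [hf, hfδ] with j hfj hfjδ W hWV hW hWconn
  have hWdisj : Disjoint W (thickening ε (frontier Y)) :=
    hdisj.mono_left (hWV.trans Set.inter_subset_right)
  rw [← inter_preimage_eq_sdiff_inter_preimage hfjδ hWdisj]
  exact hfj W (hWV.trans Set.inter_subset_left) hW hWconn

section NormedSpace

variable {E : Type*} [NormedAddCommGroup E] [NormedSpace ℝ E]

theorem frontier_nonempty_of_isBounded [Nontrivial E] {Y : Set E} (hY : Bornology.IsBounded Y)
    (hne : Y.Nonempty) : (frontier Y).Nonempty := by
  refine nonempty_frontier_iff.2 ⟨hne, ?_⟩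
  rintro rfl
  exact NormedSpace.unbounded_univ ℝ E hY

theorem mapsTo_thickening_frontier_of_infDist_lt {X Y : Set E} (hY : Bornology.IsBounded Y)
    (hne : Y.Nonempty) {f : E → E} {δ ε : ℝ}
    (hf : ∀ x ∈ X, infDist x (frontier X) < δ → infDist (f x) (frontier Y) < ε) :
    Set.MapsTo f (X ∩ thickening δ (frontier X)) (thickening ε (frontier Y)) := by
  rintro x ⟨hxX, hxδ⟩
  -- `infDist · ∅ = 0` whereas `thickening ε ∅ = ∅`, so both boundaries must be seen to be nonempty.
  have hXne : (frontier X).Nonempty := (thickening_nonempty_iff.1 ⟨x, hxδ⟩).2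
  have : Nontrivial E := not_subsingleton_iff_nontrivial.1 fun _ =>
    hXne.ne_empty (isClopen_discrete X).frontier_eq
  rw [mem_thickening_iff_infDist_lt (frontier_nonempty_of_isBounded hY hne)]
  exact hf x hxX ((mem_thickening_iff_infDist_lt hXne).1 hxδ)

end NormedSpace

/-- Theorem 1.7: monotonicity of weak limits of homeomorphisms.
Let `X, Y` be bounded open subsets of `ℝⁿ`, let `h_j : X → Y` be homeomorphisms
of `X` onto `Y` converging to a continuous map `h` uniformly on compact subsets
of `X`, and assume the uniform distance-to-boundary condition: for every
`ε > 0` there is `δ > 0` such that every `x ∈ X` with `dist(x, ∂X) < δ`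
satisfies `dist(h_j(x), ∂Y) < ε` for all `j` and `dist(h(x), ∂Y) < ε`.
Then for every compact connected `K ⊆ Y` the preimage `h⁻¹(K)` (taken within
`X`) is compact and preconnected. -/
theorem stmt19 (n : ℕ)
    (X Y : Set (EuclideanSpace ℝ (Fin n)))
    (hXopen : IsOpen X) (hXbdd : Bornology.IsBounded X)
    (hYopen : IsOpen Y) (hYbdd : Bornology.IsBounded Y)
    (hj : ℕ → EuclideanSpace ℝ (Fin n) → EuclideanSpace ℝ (Fin n))
    (hhomeo : ∀ j : ℕ, ∃ e : X ≃ₜ Y, ∀ x : X, hj j (x : EuclideanSpace ℝ (Fin n)) = (e x : EuclideanSpace ℝ (Fin n)))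
    (h : EuclideanSpace ℝ (Fin n) → EuclideanSpace ℝ (Fin n))
    (hcont : ContinuousOn h X)
    (hconv : ∀ K : Set (EuclideanSpace ℝ (Fin n)), K ⊆ X → IsCompact K →
      TendstoUniformlyOn hj h atTop K)
    (hbdry : ∀ ε : ℝ, 0 < ε → ∃ δ : ℝ, 0 < δ ∧ ∀ x ∈ X,
      infDist x (frontier X) < δ →
        (∀ j : ℕ, infDist (hj j x) (frontier Y) < ε) ∧ infDist (h x) (frontier Y) < ε) :
    ∀ K : Set (EuclideanSpace ℝ (Fin n)), K ⊆ Y → IsCompact K → IsConnected K →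
      IsCompact (X ∩ h ⁻¹' K) ∧ IsPreconnected (X ∩ h ⁻¹' K) := by
  intro K hKY hK hKconn
  have hYne : Y.Nonempty := hKconn.nonempty.mono hKY
  refine stmt19_general hXbdd hYopen (.of_forall fun j W hWY _ hW => ?_) hcont hconv
    (fun ε hε => ?_) hKY hK hKconn.isPreconnected
  · obtain ⟨e, he⟩ := hhomeo j
    exact isPreconnected_inter_preimage_of_homeomorph e he hWY hW
  · obtain ⟨δ, hδ, hδε⟩ := hbdry ε hε
    exact ⟨δ, hδ,
      .of_forall fun j => mapsTo_thickening_frontier_of_infDist_lt hYbdd hYne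
        fun x hx hxδ => (hδε x hx hxδ).1 j,
      mapsTo_thickening_frontier_of_infDist_lt hYbdd hYne fun x hx hxδ => (hδε x hx hxδ).2⟩
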